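/- arXiv:2201.01263 — 2 statements merged into one kernel-verified Lean document; each statement's English description precedes it below -/
import Mathlib

section
/- Let Λ → Γ be a morphism of groupoids inducing maps on classifying spaces and group C*-algebras, and consider the commutative ladder relating the long exact sequence in KO-homology of the pair (BΓ, BΛ) to the long exact KO-theory sequence of the mapping cone C*-algebra C*(Γ, Λ), via the assembly maps A_Λ, A_Γ and the relative assembly map A_{Γ,Λ}. If there exist splitting maps s_Λ: KO_*(C*(Λ)) → KO_*(BΛ) with s_Λ ∘ A_Λ = id and s_Γ: KO_*(C*(Γ)) → KO_*(BΓ) with s_Γ ∘ A_Γ = id which are compatible, i.e. the square formed by s_Λ, s_Γ and the maps induced by Λ → Γ commutes, then the relative assembly map A_{Γ,Λ}: KO_n(BΓ, BΛ) → KO_n(C*(Γ, Λ)) is injective. -/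
/-!
The four lemma does not apply, since the assembly map `KO_n(BΛ) → KO_n(C*(Λ))` need not be
surjective. Its surjectivity would serve to lift a class of `KO_n(BΓ)` to `KO_n(BΛ)` once its image
in `KO_n(C*(Γ))` comes from `KO_n(C*(Λ))`; compatible splittings produce such a lift directly.
-/

section

variable {A B C D A' B' C' D' : Type*}
  [AddGroup A] [AddGroup B] [AddGroup C] [AddGroup D]
  [AddGroup A'] [AddGroup B'] [AddGroup C'] [AddGroup D']

theorem ker_le_ker_of_injective_of_comp_eq_comp {d : C →+ D} {d' : C' →+ D'} {γ : C →+ C'}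
    {δ : D →+ D'} (hδ : Function.Injective δ) (hsq : δ.comp d = d'.comp γ) :
    γ.ker ≤ d.ker :=
  calc
    γ.ker ≤ d'.ker.comap γ := γ.ker_le_comap d'.ker
    _ = (δ.comp d).ker := by rw [AddMonoidHom.comap_ker, hsq]
    _ = d.ker := AddMonoidHom.ker_comp_of_injective d δ hδ

theorem comap_range_le_range_of_retraction {i : A →+ B} {i' : A' →+ B'} {β : B →+ B'}
    {r : A' →+ A} {s : B' →+ B} (hs : s.comp β = AddMonoidHom.id B)
    (hcompat : s.comp i' = i.comp r) :
    i'.range.comap β ≤ i.range := by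
  rintro y ⟨z, hz⟩
  refine ⟨r z, ?_⟩
  calc
    i (r z) = s (i' z) := (DFunLike.congr_fun hcompat z).symm
    _ = s (β y) := congrArg s hz
    _ = y := DFunLike.congr_fun hs y

theorem injective_of_ker_le_range_of_ker_comp_le_ker {j : B →+ C} {γ : C →+ C'}
    (hrange : γ.ker ≤ j.range) (hker : (γ.comp j).ker ≤ j.ker) :
    Function.Injective γ := by
  rw [injective_iff_map_eq_zero]
  intro x hx
  obtain ⟨y, rfl⟩ := hrange hx
  exact hker hx

theorem relative_assembly_injective_of_compatible_splittings_general
    {i : A →+ B} {j : B →+ C} {d : C →+ D}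
    (hij : Function.Exact i j) (hjd : Function.Exact j d)
    {i' : A' →+ B'} {j' : B' →+ C'} {d' : C' →+ D'} (hij' : Function.Exact i' j')
    {β : B →+ B'} {γ : C →+ C'} {δ : D →+ D'}
    (hβγ : γ.comp j = j'.comp β) (hγδ : δ.comp d = d'.comp γ) (hδ : Function.Injective δ)
    {r : A' →+ A} {s : B' →+ B} (hs : s.comp β = AddMonoidHom.id B)
    (hcompat : s.comp i' = i.comp r) :
    Function.Injective γ := by
  have hrange : γ.ker ≤ j.range :=
    (ker_le_ker_of_injective_of_comp_eq_comp hδ hγδ).trans_eq hjd.addMonoidHom_ker_eq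
  have hker : (γ.comp j).ker ≤ j.ker :=
    calc
      (γ.comp j).ker = j'.ker.comap β := by rw [hβγ, AddMonoidHom.comap_ker]
      _ = i'.range.comap β := by rw [hij'.addMonoidHom_ker_eq]
      _ ≤ i.range := comap_range_le_range_of_retraction hs hcompat
      _ = j.ker := hij.addMonoidHom_ker_eq.symm
  exact injective_of_ker_le_range_of_ker_comp_le_ker hrange hker

end

/-- **Injectivity of the relative assembly map from compatible splittings.**
Given a morphism of groupoids `Λ → Γ`, the long exact sequence in periodic
real K-homology of the pair `(BΓ, BΛ)` (groups `KOBL n = KO_n(BΛ)`,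
`KOBG n = KO_n(BΓ)`, `KOBrel n = KO_n(BΓ, BΛ)`) maps, via the assembly maps
`AL`, `AG` and the relative assembly map `Arel`, to the long exact KO-theory
sequence of the mapping cone C*-algebra `C*(Γ, Λ)` of
`C*(Λ) → C*(Γ)` (groups `KOCL n = KO_n(C*(Λ))`, `KOCG n = KO_n(C*(Γ))`,
`KOCrel n = KO_n(C*(Γ, Λ))`), with all squares commuting.  If there are
splittings `sL` of `AL` and `sG` of `AG` compatible with the maps induced
by `Λ → Γ`, then the relative assembly map
`Arel : KO_n(BΓ, BΛ) → KO_n(C*(Γ, Λ))` is injective. -/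
theorem relative_assembly_injective_of_compatible_splittings
    (KOBL KOBG KOBrel KOCL KOCG KOCrel : ℤ → Type)
    [∀ n, AddCommGroup (KOBL n)] [∀ n, AddCommGroup (KOBG n)]
    [∀ n, AddCommGroup (KOBrel n)] [∀ n, AddCommGroup (KOCL n)]
    [∀ n, AddCommGroup (KOCG n)] [∀ n, AddCommGroup (KOCrel n)]
    -- the long exact KO-homology sequence of the pair (BΓ, BΛ)
    (iB : ∀ n, KOBL n →+ KOBG n) (jB : ∀ n, KOBG n →+ KOBrel n)
    (dB : ∀ n, KOBrel n →+ KOBL (n - 1))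
    (hBex₁ : ∀ n, Function.Exact (iB n) (jB n))
    (hBex₂ : ∀ n, Function.Exact (jB n) (dB n))
    (hBex₃ : ∀ n, Function.Exact (dB n) (iB (n - 1)))
    -- the long exact KO-theory sequence of the mapping cone C*(Γ, Λ)
    (iC : ∀ n, KOCL n →+ KOCG n) (jC : ∀ n, KOCG n →+ KOCrel n)
    (dC : ∀ n, KOCrel n →+ KOCL (n - 1))
    (hCex₁ : ∀ n, Function.Exact (iC n) (jC n))
    (hCex₂ : ∀ n, Function.Exact (jC n) (dC n))
    (hCex₃ : ∀ n, Function.Exact (dC n) (iC (n - 1)))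
    -- the assembly maps, forming a commutative ladder
    (AL : ∀ n, KOBL n →+ KOCL n) (AG : ∀ n, KOBG n →+ KOCG n)
    (Arel : ∀ n, KOBrel n →+ KOCrel n)
    (hsq₁ : ∀ n, (AG n).comp (iB n) = (iC n).comp (AL n))
    (hsq₂ : ∀ n, (Arel n).comp (jB n) = (jC n).comp (AG n))
    (hsq₃ : ∀ n, (AL (n - 1)).comp (dB n) = (dC n).comp (Arel n))
    -- compatible splittings of the assembly maps for Λ and Γ
    (sL : ∀ n, KOCL n →+ KOBL n)
    (hsL : ∀ n, (sL n).comp (AL n) = AddMonoidHom.id (KOBL n))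
    (sG : ∀ n, KOCG n →+ KOBG n)
    (hsG : ∀ n, (sG n).comp (AG n) = AddMonoidHom.id (KOBG n))
    (hcompat : ∀ n, (sG n).comp (iC n) = (iB n).comp (sL n))
    (n : ℤ) :
    Function.Injective (Arel n) := by
  have hAL : Function.Injective (AL (n - 1)) :=
    Function.LeftInverse.injective (DFunLike.congr_fun (hsL (n - 1)))
  exact relative_assembly_injective_of_compatible_splittings_general (hBex₁ n) (hBex₂ n) (hCex₁ n)
    (hsq₂ n) (hsq₃ n) hAL (hsG n) (hcompat n)
end

section
/- Let Γ be a group and Λ a subgroup (more generally, a family of subgroups Λⱼ ≤ Γ), and let G = Γ *_Λ Γ be the amalgamated product of two copies of Γ along Λ (the pushout of two copies of the inclusion Λ ↪ Γ). Then the folding homomorphism f: G → Γ, which restricts to the identity on each of the two copies of Γ, is a split surjection, its kernel F is a free group, and consequently G is isomorphic to the semidirect product F ⋊ Γ. -/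
open Monoid

/-!
Fix one copy `i₀` of `Γ` in the amalgam `G` and let `K` be the image of the amalgamated group. The
elements `of i g * (of i₀ g)⁻¹` lie in the kernel of the folding map, depend only on `i` and on the
coset `g K`, and are trivial for `i = i₀` and for the coset `K`. Conjugation by `of i₀ g` acts on
them by the cocycle rule `(i, q) ↦ (i, g K)⁻¹ * (i, g • q)`. This rule defines an action of `Γ` on
the free group on the pairs `(i, q)` with `i ≠ i₀` and `q ≠ K`, and in the resulting semidirect
product `g ↦ (i, g K) * g` is a homomorphism for each `i`. These homomorphisms agree on `K`, and
together they invert the obvious map from the semidirect product to `G`.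
-/

universe u v w

section FreeGroupOnCosets

variable {Γ : Type u} [Group Γ] (K : Subgroup Γ) {ι : Type v} (i₀ : ι)

/-- The abstract kernel of the folding map of copies of `Γ`, indexed by `ι` and amalgamated over
maps with image `K`: the free group on the pairs of an index other than `i₀` and a nontrivial coset
of `K`. -/
abbrev FoldKernel : Type max u v :=
  FreeGroup {p : ι × Γ ⧸ K // p.1 ≠ i₀ ∧ p.2 ≠ ((1 : Γ) : Γ ⧸ K)}

namespace FoldKernel

variable {K}

open Classical in
/-- The generator of `FoldKernel K i₀` at an arbitrary pair. It is `1` on the pairs that do not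
index the basis, so that identities between generators hold without case distinctions. -/
noncomputable def gen (i : ι) (q : Γ ⧸ K) : FoldKernel K i₀ :=
  if h : i ≠ i₀ ∧ q ≠ ((1 : Γ) : Γ ⧸ K) then FreeGroup.of ⟨(i, q), h⟩ else 1

@[simp]
theorem gen_base (q : Γ ⧸ K) : gen i₀ i₀ q = 1 := by simp [gen]

@[simp]
theorem gen_coe_one (i : ι) : gen i₀ i ((1 : Γ) : Γ ⧸ K) = 1 := by simp [gen]

variable {i₀} {M : Type w} [Group M]

theorem hom_ext {f f' : FoldKernel K i₀ →* M} (h : ∀ i q, f (gen i₀ i q) = f' (gen i₀ i q)) :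
    f = f' := by
  refine FreeGroup.ext_hom _ _ fun p => ?_
  simpa [gen, p.2] using h p.1.1 p.1.2

/-- The homomorphism out of `FoldKernel K i₀` with prescribed values on the basis. The values of `y`
off the basis are ignored; `lift_gen` requires them to be `1`. -/
def lift (y : ι → Γ ⧸ K → M) : FoldKernel K i₀ →* M :=
  FreeGroup.lift fun p => y p.1.1 p.1.2

theorem lift_gen {y : ι → Γ ⧸ K → M} (hbase : ∀ q, y i₀ q = 1)
    (hone : ∀ i, y i ((1 : Γ) : Γ ⧸ K) = 1) (i : ι) (q : Γ ⧸ K) :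
    lift y (gen i₀ i q) = y i q := by
  by_cases h : i ≠ i₀ ∧ q ≠ ((1 : Γ) : Γ ⧸ K)
  · simp [lift, gen, h]
  · obtain rfl | rfl : i = i₀ ∨ q = ((1 : Γ) : Γ ⧸ K) := by tauto
    · simp [hbase]
    · simp [hone]

variable (i₀)

/-- The endomorphism of `FoldKernel K i₀` that corresponds to conjugation by the element `g` of the
copy `i₀` of `Γ`. -/
noncomputable def actHom (g : Γ) : FoldKernel K i₀ →* FoldKernel K i₀ :=
  lift fun i q => (gen i₀ i (g : Γ ⧸ K))⁻¹ * gen i₀ i (g • q)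

theorem actHom_gen (g : Γ) (i : ι) (q : Γ ⧸ K) :
    actHom i₀ g (gen i₀ i q) = (gen i₀ i (g : Γ ⧸ K))⁻¹ * gen i₀ i (g • q) :=
  lift_gen (by simp) (by simp) i q

theorem actHom_one : actHom i₀ (1 : Γ) = MonoidHom.id (FoldKernel K i₀) :=
  hom_ext fun i q => by simp [actHom_gen]

theorem actHom_mul (g h : Γ) :
    actHom (K := K) i₀ (g * h) = (actHom i₀ g).comp (actHom i₀ h) :=
  hom_ext fun i q => by simp [actHom_gen, mul_smul]

variable (K)

/-- The action of `Γ` on `FoldKernel K i₀` by the automorphisms `actHom`. -/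
noncomputable def act : Γ →* MulAut (FoldKernel K i₀) where
  toFun g := MonoidHom.toMulEquiv (actHom i₀ g) (actHom i₀ g⁻¹)
    (by rw [← actHom_mul, inv_mul_cancel, actHom_one])
    (by rw [← actHom_mul, mul_inv_cancel, actHom_one])
  map_one' := by ext x; simp [actHom_one]
  map_mul' g h := by ext x; simp [actHom_mul]

variable {K}

theorem act_gen (g : Γ) (i : ι) (q : Γ ⧸ K) :
    act K i₀ g (gen i₀ i q) = (gen i₀ i (g : Γ ⧸ K))⁻¹ * gen i₀ i (g • q) :=
  actHom_gen i₀ g i q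

variable (K)

/-- The copy of `Γ` with index `i` in the semidirect product `FoldKernel K i₀ ⋊ Γ`. -/
noncomputable def copy (i : ι) : Γ →* FoldKernel K i₀ ⋊[act K i₀] Γ where
  toFun g := ⟨gen i₀ i (g : Γ ⧸ K), g⟩
  map_one' := by ext <;> simp
  map_mul' g h := by ext <;> simp [act_gen]

variable {K}

theorem copy_eq_inl_mul_inr (i : ι) (g : Γ) :
    copy K i₀ i g = SemidirectProduct.inl (gen i₀ i (g : Γ ⧸ K)) * SemidirectProduct.inr g :=
  SemidirectProduct.mk_eq_inl_mul_inr _ _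

theorem copy_base : copy K i₀ i₀ = SemidirectProduct.inr := by
  ext g : 1
  simp [copy_eq_inl_mul_inr]

theorem copy_of_mem {g : Γ} (hg : g ∈ K) (i : ι) : copy K i₀ i g = SemidirectProduct.inr g := by
  have hcoset : (g : Γ ⧸ K) = ((1 : Γ) : Γ ⧸ K) := by simpa [QuotientGroup.eq] using hg
  simp [copy_eq_inl_mul_inr, hcoset]

end FoldKernel

end FreeGroupOnCosets

section Amalgam

variable {Γ : Type u} [Group Γ] {H : Type w} [Group H] (k : H →* Γ) {ι : Type v}

/-- The amalgam of copies of `Γ`, indexed by `ι`, along the same homomorphism `k : H →* Γ`. -/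
abbrev CopiesAmalgam (ι : Type v) : Type max u v w := PushoutI (fun _ : ι => k)

namespace CopiesAmalgam

open FoldKernel

variable (i₀ : ι)

/-- The inclusion of the copy of `Γ` with index `i` into the amalgam. -/
abbrev of (i : ι) : Γ →* CopiesAmalgam k ι := PushoutI.of (φ := fun _ : ι => k) i

/-- The quotient of the two images of `g` in the copies `i` and `i₀`, an element of the kernel of
the folding map. -/
def discrepancy (i : ι) (g : Γ) : CopiesAmalgam k ι := of k i g * (of k i₀ g)⁻¹

theorem of_map_eq (i j : ι) (h : H) : of k i (k h) = of k j (k h) := by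
  simp only [PushoutI.of_apply_eq_base (fun _ : ι => k)]

theorem discrepancy_mul_map (i : ι) (g : Γ) (h : H) :
    discrepancy k i₀ i (g * k h) = discrepancy k i₀ i g := by
  simp [discrepancy, of_map_eq k i i₀ h]

/-- The function on cosets induced by `discrepancy`. -/
def cosetDiscrepancy (i : ι) (q : Γ ⧸ k.range) : CopiesAmalgam k ι :=
  Quotient.liftOn' q (discrepancy k i₀ i) fun a b hab => by
    obtain ⟨h, hh⟩ := QuotientGroup.leftRel_apply.mp hab
    rw [← discrepancy_mul_map k i₀ i a h, hh, mul_inv_cancel_left]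

theorem cosetDiscrepancy_coe (i : ι) (g : Γ) :
    cosetDiscrepancy k i₀ i (g : Γ ⧸ k.range) = of k i g * (of k i₀ g)⁻¹ :=
  rfl

theorem cosetDiscrepancy_smul (i : ι) (g : Γ) (q : Γ ⧸ k.range) :
    cosetDiscrepancy k i₀ i (g • q) =
      cosetDiscrepancy k i₀ i (g : Γ ⧸ k.range) *
        (of k i₀ g * cosetDiscrepancy k i₀ i q * (of k i₀ g)⁻¹) := by
  induction q using QuotientGroup.induction_on with
  | H z => simp [cosetDiscrepancy_coe, mul_assoc]

/-- The homomorphism that realizes `FoldKernel` inside the amalgam. -/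
def ofFoldKernel : FoldKernel k.range i₀ →* CopiesAmalgam k ι :=
  FoldKernel.lift (cosetDiscrepancy k i₀)

theorem ofFoldKernel_gen (i : ι) (q : Γ ⧸ k.range) :
    ofFoldKernel k i₀ (gen i₀ i q) = cosetDiscrepancy k i₀ i q := by
  refine lift_gen (fun q => ?_) (fun i => by simp [cosetDiscrepancy_coe]) i q
  induction q using QuotientGroup.induction_on with
  | H z => simp [cosetDiscrepancy_coe]

theorem ofFoldKernel_act (g : Γ) (x : FoldKernel k.range i₀) :
    ofFoldKernel k i₀ (act k.range i₀ g x) =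
      of k i₀ g * ofFoldKernel k i₀ x * (of k i₀ g)⁻¹ := by
  suffices (ofFoldKernel k i₀).comp (act k.range i₀ g).toMonoidHom =
      (MulAut.conj (of k i₀ g)).toMonoidHom.comp (ofFoldKernel k i₀) from DFunLike.congr_fun this x
  refine hom_ext fun i q => ?_
  simp [act_gen, ofFoldKernel_gen, cosetDiscrepancy_smul]

/-- The amalgam maps to the semidirect product by sending each copy of `Γ` to the
corresponding `FoldKernel.copy`. -/
noncomputable def toSemidirect :
    CopiesAmalgam k ι →* FoldKernel k.range i₀ ⋊[act k.range i₀] Γ :=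
  PushoutI.lift (copy k.range i₀) (SemidirectProduct.inr.comp k) fun i =>
    MonoidHom.ext fun h => copy_of_mem i₀ (k.mem_range.mpr ⟨h, rfl⟩) i

theorem toSemidirect_of (i : ι) (g : Γ) :
    toSemidirect k i₀ (of k i g) = copy k.range i₀ i g :=
  PushoutI.lift_of ..

/-- The inverse of `toSemidirect`: it is `ofFoldKernel` on the normal factor and the inclusion of
the copy `i₀` on `Γ`. -/
noncomputable def ofSemidirect : FoldKernel k.range i₀ ⋊[act k.range i₀] Γ →* CopiesAmalgam k ι :=
  SemidirectProduct.lift (ofFoldKernel k i₀) (of k i₀) fun g =>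
    MonoidHom.ext (ofFoldKernel_act k i₀ g)

theorem ofSemidirect_inl (x : FoldKernel k.range i₀) :
    ofSemidirect k i₀ (SemidirectProduct.inl x) = ofFoldKernel k i₀ x := by
  simp [ofSemidirect]

theorem ofSemidirect_inr (g : Γ) :
    ofSemidirect k i₀ (SemidirectProduct.inr g) = of k i₀ g := by
  simp [ofSemidirect]

theorem ofSemidirect_copy (i : ι) (g : Γ) :
    ofSemidirect k i₀ (copy k.range i₀ i g) = of k i g := by
  rw [copy_eq_inl_mul_inr, map_mul, ofSemidirect_inl, ofSemidirect_inr, ofFoldKernel_gen,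
    cosetDiscrepancy_coe, inv_mul_cancel_right]

theorem ofSemidirect_comp_toSemidirect :
    (ofSemidirect k i₀).comp (toSemidirect k i₀) = MonoidHom.id (CopiesAmalgam k ι) := by
  have : Nonempty ι := ⟨i₀⟩
  refine PushoutI.hom_ext_nonempty fun i => MonoidHom.ext fun g => ?_
  simp only [MonoidHom.comp_apply, toSemidirect_of, ofSemidirect_copy, MonoidHom.id_apply]

theorem toSemidirect_cosetDiscrepancy (i : ι) (q : Γ ⧸ k.range) :
    toSemidirect k i₀ (cosetDiscrepancy k i₀ i q) = SemidirectProduct.inl (gen i₀ i q) := by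
  induction q using QuotientGroup.induction_on with
  | H z =>
    rw [cosetDiscrepancy_coe, map_mul, map_inv, toSemidirect_of, toSemidirect_of, copy_base,
      copy_eq_inl_mul_inr, mul_inv_cancel_right]

theorem toSemidirect_comp_ofSemidirect :
    (toSemidirect k i₀).comp (ofSemidirect k i₀) = MonoidHom.id _ := by
  refine SemidirectProduct.hom_ext (hom_ext fun i q => ?_) (MonoidHom.ext fun g => ?_)
  · simp [ofSemidirect_inl, ofFoldKernel_gen, toSemidirect_cosetDiscrepancy]
  · simp [ofSemidirect_inr, toSemidirect_of, copy_base]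

/-- The amalgam is the semidirect product of `FoldKernel` by the copy `i₀` of `Γ`. -/
noncomputable def semidirectMulEquiv :
    CopiesAmalgam k ι ≃* FoldKernel k.range i₀ ⋊[act k.range i₀] Γ :=
  MonoidHom.toMulEquiv (toSemidirect k i₀) (ofSemidirect k i₀)
    (ofSemidirect_comp_toSemidirect k i₀) (toSemidirect_comp_ofSemidirect k i₀)

theorem semidirectMulEquiv_symm_comp_inl :
    (semidirectMulEquiv k i₀).symm.toMonoidHom.comp SemidirectProduct.inl =
      ofFoldKernel k i₀ :=
  MonoidHom.ext (ofSemidirect_inl k i₀)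

theorem ofFoldKernel_injective : Function.Injective (ofFoldKernel k i₀) := by
  rw [← semidirectMulEquiv_symm_comp_inl]
  exact (semidirectMulEquiv k i₀).symm.injective.comp SemidirectProduct.inl_injective

variable {k} {f : CopiesAmalgam k ι →* Γ}

theorem rightHom_comp_semidirectMulEquiv (hf : ∀ i, f.comp (of k i) = MonoidHom.id Γ) :
    SemidirectProduct.rightHom.comp (semidirectMulEquiv k i₀).toMonoidHom = f := by
  have : Nonempty ι := ⟨i₀⟩
  refine PushoutI.hom_ext_nonempty fun i => Eq.trans (MonoidHom.ext fun g => ?_) (hf i).symm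
  exact congrArg SemidirectProduct.right (toSemidirect_of k i₀ i g)

theorem range_ofFoldKernel (hf : ∀ i, f.comp (of k i) = MonoidHom.id Γ) :
    (ofFoldKernel k i₀).range = f.ker := by
  rw [← rightHom_comp_semidirectMulEquiv i₀ hf, MulEquiv.toMonoidHom_eq_coe,
    MonoidHom.ker_comp_mulEquiv, ← SemidirectProduct.range_inl_eq_ker_rightHom,
    MonoidHom.map_range]
  exact congrArg MonoidHom.range (semidirectMulEquiv_symm_comp_inl k i₀).symm

theorem isFreeGroup_ker [Nonempty ι] (hf : ∀ i, f.comp (of k i) = MonoidHom.id Γ) :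
    IsFreeGroup f.ker := by
  rw [← range_ofFoldKernel (Classical.arbitrary ι) hf]
  exact IsFreeGroup.ofMulEquiv (MonoidHom.ofInjective (ofFoldKernel_injective k _))

end CopiesAmalgam

end Amalgam

theorem exists_mulEquiv_ker_semidirectProduct {E : Type u} {G : Type v} [Group E] [Group G]
    {f : E →* G} {s : G →* E} (hs : f.comp s = MonoidHom.id G) :
    ∃ φ : G →* MulAut f.ker, Nonempty (E ≃* f.ker ⋊[φ] G) := by
  have hright : Function.RightInverse s f := DFunLike.congr_fun hs
  let S : GroupExtension f.ker E G :=
    { inl := f.ker.subtype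
      rightHom := f
      inl_injective := f.ker.subtype_injective
      range_inl_eq_ker_rightHom := f.ker.range_subtype
      rightHom_surjective := hright.surjective }
  let splitting : S.Splitting := { s with rightInverse_rightHom := hright }
  exact ⟨splitting.conjAct, ⟨splitting.semidirectProductMulEquiv.symm⟩⟩

theorem folding_map_split_free_kernel_semidirect_general
    {ι : Type v} [Nonempty ι] {Γ : Type u} [Group Γ] {H : Type w} [Group H] (k : H →* Γ)
    (f : PushoutI (fun _ : ι => k) →* Γ)
    (hf : ∀ i : ι, f.comp (PushoutI.of (φ := fun _ : ι => k) i) = MonoidHom.id Γ) :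
    (∃ s : Γ →* PushoutI (fun _ : ι => k), f.comp s = MonoidHom.id Γ) ∧
    Function.Surjective f ∧
    IsFreeGroup f.ker ∧
    ∃ φ : Γ →* MulAut f.ker, Nonempty (PushoutI (fun _ : ι => k) ≃* f.ker ⋊[φ] Γ) := by
  let i₀ : ι := Classical.arbitrary ι
  have hright : Function.RightInverse (PushoutI.of i₀) f := DFunLike.congr_fun (hf i₀)
  exact ⟨⟨_, hf i₀⟩, hright.surjective, CopiesAmalgam.isFreeGroup_ker hf,
    exists_mulEquiv_ker_semidirectProduct (hf i₀)⟩

/-- **The folding map of an amalgamated double of groups.**  Let `Γ` be a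
group and `Λⱼ` (for `j : ι`) a family of subgroups, and let
`G = Γ *_Λ Γ` be the amalgamated product of two copies of `Γ` along the
family `Λ`, i.e. the pushout of two copies of the canonical map
`k : *ⱼ Λⱼ → Γ` from the free product of the family (this is the colimit
of the diagram `Γ ← ⊔ⱼ Λⱼ → Γ` of groupoids).  Then the folding
homomorphism `f : G → Γ`, characterized by restricting to the identity on
each of the two copies of `Γ`, is a split surjection, its kernel is a free
group, and `G` is isomorphic to the semidirect product `ker f ⋊ Γ`. -/
theorem folding_map_split_free_kernel_semidirect
    {ι : Type} {Γ : Type} [Group Γ] (Λ : ι → Subgroup Γ)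
    (k : Monoid.CoprodI (fun j : ι => (Λ j : Type)) →* Γ)
    (hk : ∀ (j : ι) (x : Λ j), k (Monoid.CoprodI.of x) = (x : Γ))
    (f : Monoid.PushoutI (fun _ : Bool => k) →* Γ)
    (hf : ∀ i : Bool,
      f.comp (Monoid.PushoutI.of (φ := fun _ : Bool => k) i) =
        MonoidHom.id Γ) :
    (∃ s : Γ →* Monoid.PushoutI (fun _ : Bool => k),
        f.comp s = MonoidHom.id Γ) ∧
    Function.Surjective f ∧
    IsFreeGroup f.ker ∧
    ∃ φ : Γ →* MulAut f.ker,
      Nonempty (Monoid.PushoutI (fun _ : Bool => k) ≃* f.ker ⋊[φ] Γ) :=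
  folding_map_split_free_kernel_semidirect_general k f hf
end
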